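/- Let n ≥ 2 and let u : ℝⁿ → ℝ be Lipschitz, positively one-homogeneous (u(t·x) = t·u(x) for all t ≥ 0 and x ∈ ℝⁿ), smooth on ℝⁿ \ {0}, and satisfy the minimal surface equation (1 + |∇u|²)·Δu − ⟨∇u, (D²u)∇u⟩ = 0 at every point of ℝⁿ \ {0}. Then u is linear: there exists a ∈ ℝⁿ with u(x) = ⟨a, x⟩ for all x ∈ ℝⁿ. -/

import Mathlib

open scoped RealInnerProductSpace

/-- The Hessian of `f` at `x`, applied to the vector `ξ` (i.e. `(D²f(x))ξ`). -/
noncomputable def hess {n : ℕ} (f : EuclideanSpace ℝ (Fin n) → ℝ)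
    (x ξ : EuclideanSpace ℝ (Fin n)) : EuclideanSpace ℝ (Fin n) :=
  fderiv ℝ (gradient f) x ξ

/-- The Laplacian of `f` at `x`, as the trace of the Hessian. -/
noncomputable def lap {n : ℕ} (f : EuclideanSpace ℝ (Fin n) → ℝ)
    (x : EuclideanSpace ℝ (Fin n)) : ℝ :=
  ∑ i, ⟪hess f x (EuclideanSpace.single i 1), EuclideanSpace.single i 1⟫

/-- `f` satisfies the translator equation with velocity `(v', vn) ∈ ℝⁿ × ℝ` at the point `x`:
`(1 + |∇f|²)·Δf − ⟨∇f, (D²f)∇f⟩ = (v_{n+1} − ⟨v', ∇f⟩)·(1 + |∇f|²)`. -/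
def TranslatorEqAt {n : ℕ} (f : EuclideanSpace ℝ (Fin n) → ℝ)
    (v' : EuclideanSpace ℝ (Fin n)) (vn : ℝ) (x : EuclideanSpace ℝ (Fin n)) : Prop :=
  (1 + ‖gradient f x‖ ^ 2) * lap f x - ⟪gradient f x, hess f x (gradient f x)⟫
    = (vn - ⟪v', gradient f x⟫) * (1 + ‖gradient f x‖ ^ 2)

/-!
The derivative `Du` of a one-homogeneous `u` is zero-homogeneous, so each partial derivative
`w = ∂ₑu` attains its maximum over `ℝⁿ ∖ {0}` already on the unit sphere. Differentiating the
equation `F(Du, D²u) = 0` in the direction `e` shows that `w` solves a linear equation without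
zeroth order term, which is elliptic because `F` is. Since `ℝⁿ ∖ {0}` is connected for `n ≥ 2`,
Hopf's strong maximum principle makes `w` constant. Thus `Du` is constant, and `u` is linear by
Euler's identity `u(x) = Du(x) x`.
-/

open Set Metric Filter Topology InnerProductSpace

section Analysis

variable {E F : Type*} [NormedAddCommGroup E] [NormedSpace ℝ E]
  [NormedAddCommGroup F] [NormedSpace ℝ F]

theorem deriv_deriv_nonpos_of_isLocalMax {f : ℝ → ℝ} {a : ℝ} (hmax : IsLocalMax f a)
    (hf : ContinuousAt f a) : deriv (deriv f) a ≤ 0 := by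
  by_contra! hpos
  have hmin : IsLocalMin f a := isLocalMin_of_deriv_deriv_pos hpos hmax.deriv_eq_zero hf
  have hconst : f =ᶠ[𝓝 a] fun _ => f a :=
    (hmax.and hmin).mono fun x hx => le_antisymm hx.1 hx.2
  have hzero : deriv (deriv f) a = 0 := by
    rw [hconst.deriv.deriv_eq]
    simp
  exact hpos.ne' hzero

theorem deriv_deriv_comp_add_smul {f : E → F} {a : E} (hf : ContDiffAt ℝ 2 f a) (ξ : E) :
    deriv (deriv fun t : ℝ => f (a + t • ξ)) 0 = fderiv ℝ (fderiv ℝ f) a ξ ξ := by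
  have hline (t : ℝ) : HasDerivAt (fun t : ℝ => a + t • ξ) ξ t := by
    simpa using ((hasDerivAt_id t).smul_const ξ).const_add a
  have hcont : Tendsto (fun t : ℝ => a + t • ξ) (𝓝 0) (𝓝 a) := by
    simpa only [zero_smul, add_zero] using (hline 0).continuousAt.tendsto
  have hfirst : deriv (fun t : ℝ => f (a + t • ξ)) =ᶠ[𝓝 0] fun t => fderiv ℝ f (a + t • ξ) ξ := by
    filter_upwards [hcont.eventually (hf.eventually (by simp))] with t ht
    exact ((ht.differentiableAt (by simp)).hasFDerivAt.comp_hasDerivAt t (hline t)).deriv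
  have hDf : HasFDerivAt (fderiv ℝ f) (fderiv ℝ (fderiv ℝ f) a) (a + (0 : ℝ) • ξ) := by
    rw [zero_smul, add_zero]
    exact ((hf.fderiv_right (m := 1) (by norm_num)).differentiableAt (by simp)).hasFDerivAt
  have hDfline : HasDerivAt (fun t : ℝ => fderiv ℝ f (a + t • ξ)) (fderiv ℝ (fderiv ℝ f) a ξ) 0 :=
    hDf.comp_hasDerivAt 0 (hline 0)
  have hsecond : HasDerivAt (fun t : ℝ => fderiv ℝ f (a + t • ξ) ξ)
      (fderiv ℝ (fderiv ℝ f) a ξ ξ) 0 := by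
    simpa only [map_zero, add_zero] using hDfline.clm_apply (hasDerivAt_const 0 ξ)
  rw [hfirst.deriv_eq, hsecond.deriv]

theorem fderiv_fderiv_nonpos_of_isLocalMax {f : E → ℝ} {a : E} (hmax : IsLocalMax f a)
    (hf : ContDiffAt ℝ 2 f a) (ξ : E) : fderiv ℝ (fderiv ℝ f) a ξ ξ ≤ 0 := by
  have hcont : ContinuousAt (fun t : ℝ => a + t • ξ) 0 := by fun_prop
  have hbase : a + (0 : ℝ) • ξ = a := by rw [zero_smul, add_zero]
  have hmaxline : IsLocalMax (fun t : ℝ => f (a + t • ξ)) 0 := by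
    rw [← hbase] at hmax
    exact hmax.comp_continuous (g := fun t : ℝ => a + t • ξ) hcont
  rw [← deriv_deriv_comp_add_smul hf]
  exact deriv_deriv_nonpos_of_isLocalMax hmaxline
    (hf.continuousAt.comp_of_eq hcont hbase)

theorem fderiv_fderiv_apply_comm {f : E → F} {x : E} (hf : ContDiffAt ℝ 2 f x) (e : E) :
    fderiv ℝ (fun y => fderiv ℝ f y e) x = fderiv ℝ (fderiv ℝ f) x e := by
  have hDf := ((hf.fderiv_right (m := 1) (by norm_num)).differentiableAt (by simp)).hasFDerivAt
  rw [(hDf.clm_apply (hasFDerivAt_const e x)).fderiv]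
  ext ξ
  simpa using hf.isSymmSndFDerivAt (by simp) ξ e

theorem fderiv_smul_of_homogeneous {f : E → F} {t : ℝ} (ht : t ≠ 0)
    (hhom : ∀ x, f (t • x) = t • f x) (x : E) : fderiv ℝ f (t • x) = fderiv ℝ f x := by
  have h : t • fderiv ℝ f (t • x) = t • fderiv ℝ f x := by
    rw [← fderiv_comp_smul, funext hhom]
    exact congrFun (fderiv_const_smul_field t) x
  exact smul_right_injective _ ht h

theorem fderiv_apply_self_of_homogeneous {f : E → F} {x : E}
    (hhom : ∀ t : ℝ, 0 < t → f (t • x) = t • f x) (hf : DifferentiableAt ℝ f x) :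
    fderiv ℝ f x x = f x := by
  have hline : HasDerivAt (fun t : ℝ => t • x) x 1 := by
    simpa using (hasDerivAt_id (1 : ℝ)).smul_const x
  have hray : HasDerivAt (fun t : ℝ => f (t • x)) (fderiv ℝ f x x) 1 :=
    hf.hasFDerivAt.comp_hasDerivAt_of_eq 1 hline (one_smul ℝ x).symm
  have hlin : HasDerivAt (fun t : ℝ => f (t • x)) (f x) 1 := by
    have h : HasDerivAt (fun t : ℝ => t • f x) (f x) 1 := by
      simpa using (hasDerivAt_id (1 : ℝ)).smul_const (f x)
    exact h.congr_of_eventuallyEq ((lt_mem_nhds one_pos).mono hhom)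
  exact hray.unique hlin

theorem exists_isMaxOn_compl_zero_of_homogeneous [Nontrivial E] [ProperSpace E] {g : E → ℝ}
    (hg : ContinuousOn g {0}ᶜ) (hhom : ∀ t : ℝ, 0 < t → ∀ x, g (t • x) = g x) :
    ∃ a ≠ 0, IsMaxOn g {0}ᶜ a := by
  have hsphere : sphere (0 : E) 1 ⊆ {0}ᶜ := fun x hx => ne_zero_of_mem_unit_sphere ⟨x, hx⟩
  obtain ⟨a, ha, hmax⟩ := (isCompact_sphere (0 : E) 1).exists_isMaxOn
    (NormedSpace.sphere_nonempty.2 zero_le_one) (hg.mono hsphere)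
  refine ⟨a, hsphere ha, fun x hx => ?_⟩
  have hunit : ‖x‖⁻¹ • x ∈ sphere (0 : E) 1 := by
    rw [mem_sphere_zero_iff_norm]
    exact norm_smul_inv_norm hx
  have hle : g (‖x‖⁻¹ • x) ≤ g a := hmax hunit
  rwa [hhom _ (inv_pos.2 (norm_pos_iff.2 hx))] at hle

theorem eq_of_dist_midpoint_le [StrictConvexSpace ℝ E] {c z x : E}
    (hmid : dist x (midpoint ℝ c z) ≤ dist c z / 2) (hfar : dist c z ≤ dist c x) : x = z := by
  have hc : dist c (midpoint ℝ c z) = dist c z / 2 := by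
    rw [dist_left_midpoint, Real.norm_two, inv_mul_eq_div]
  have htri := dist_triangle c (midpoint ℝ c z) x
  rw [dist_comm (midpoint ℝ c z) x] at htri
  have hmid' : midpoint ℝ c z = midpoint ℝ c x := by
    apply eq_midpoint_of_dist_eq_half
    · linarith
    · rw [dist_comm]
      linarith
  have h := (midpoint_eq_midpoint_iff_vsub_eq_vsub ℝ).1 hmid'
  exact sub_eq_zero.1 (by simpa using h.symm)

/-- Moving the centre of a ball that touches `C` at `z'` halfway towards `z'` leaves `z'` as the
only touching point, because norm balls are strictly convex. -/
theorem exists_closedBall_inter_eq_singleton [StrictConvexSpace ℝ E] [ProperSpace E] {C U : Set E}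
    {z : E} (hC : IsClosed C) (hz : z ∈ C) (hCz : C ∉ 𝓝 z) (hU : U ∈ 𝓝 z) :
    ∃ y z', y ≠ z' ∧ closedBall y (dist z' y) ⊆ U ∧ closedBall y (dist z' y) ∩ C = {z'} := by
  obtain ⟨r, hr, hrU⟩ := Metric.mem_nhds_iff.1 hU
  obtain ⟨c, hc, hcC⟩ : ∃ c ∈ ball z (r / 2), c ∉ C := by
    by_contra! h
    exact hCz (mem_of_superset (ball_mem_nhds z (half_pos hr)) h)
  obtain ⟨z', hz', hdist⟩ := hC.exists_infDist_eq_dist ⟨z, hz⟩ c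
  have hnear : ∀ x ∈ C, dist c z' ≤ dist c x := fun x hx => hdist ▸ infDist_le_dist_of_mem hx
  have hne : c ≠ z' := fun h => hcC (h ▸ hz')
  have hrad : dist z' (midpoint ℝ c z') = dist c z' / 2 := by
    rw [dist_right_midpoint, Real.norm_two, inv_mul_eq_div]
  have hcmid : dist (midpoint ℝ c z') c = dist c z' / 2 := by
    rw [dist_midpoint_left, Real.norm_two, inv_mul_eq_div]
  refine ⟨midpoint ℝ c z', z', ?_, fun x hx => hrU ?_, ?_⟩
  · rw [ne_comm, ← dist_pos, hrad]
    exact half_pos (dist_pos.2 hne)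
  · rw [mem_closedBall, hrad] at hx
    rw [mem_ball] at hc ⊢
    linarith [dist_triangle4 x (midpoint ℝ c z') c z, hnear z hz, dist_comm c z]
  · refine Subset.antisymm (fun x hx => ?_) (singleton_subset_iff.2 ⟨mem_closedBall.2 le_rfl, hz'⟩)
    exact eq_of_dist_midpoint_le (hx.1.trans_eq hrad) (hnear x hx.2)

end Analysis

/-- Compactness of the part of the boundary where `φ z ≤ φ x` provides `ε`; the maximum cannot move
to the part where `φ x < φ z`, whatever `ε` is. -/
theorem exists_isLocalMax_add_mul {X : Type*} [TopologicalSpace X] {K : Set X} (hK : IsCompact K)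
    {w φ : X → ℝ} (hw : ContinuousOn w K) (hφ : Continuous φ) {z : X} (hz : z ∈ K)
    (hmax : IsMaxOn w K z) (hbdry : ∀ x ∈ K \ interior K, φ z ≤ φ x → w x < w z) :
    ∃ ε > 0, ∃ x ∈ interior K, IsLocalMax (fun x => w x + ε * φ x) x := by
  obtain ⟨ε, hε, hεle⟩ : ∃ ε, 0 < ε ∧ ∀ x ∈ K ∩ ((interior K)ᶜ ∩ {x | φ z ≤ φ x}),
      ε ≤ (w z - w x) / (1 + (φ x - φ z)) := by
    refine (hK.inter_right (isOpen_interior.isClosed_compl.inter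
      (isClosed_le continuous_const hφ))).exists_forall_le' ?_ fun x ⟨hxK, hxint, hxφ⟩ => ?_
    · refine ContinuousOn.div (continuousOn_const.sub (hw.mono inter_subset_left)) (by fun_prop)
        fun x hx => ?_
      have : φ z ≤ φ x := hx.2.2
      linarith
    · have : φ z ≤ φ x := hxφ
      exact div_pos (sub_pos.2 (hbdry x ⟨hxK, hxint⟩ hxφ)) (by linarith)
  obtain ⟨x, hx, hxmax⟩ := hK.exists_isMaxOn ⟨z, hz⟩
    (hw.add (continuousOn_const.mul hφ.continuousOn) : ContinuousOn (fun x => w x + ε * φ x) K)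
  have hzx : w z + ε * φ z ≤ w x + ε * φ x := hxmax hz
  suffices hxint : x ∈ interior K from
    ⟨ε, hε, x, hxint, hxmax.isLocalMax (mem_interior_iff_mem_nhds.1 hxint)⟩
  by_contra hxint
  rcases le_or_gt (φ z) (φ x) with hφx | hφx
  · have h := hεle x ⟨hx, hxint, hφx⟩
    rw [le_div_iff₀ (by linarith)] at h
    linarith
  · have hwx : w x ≤ w z := hmax hx
    linarith [mul_lt_mul_of_pos_left hφx hε]

section TwoJet

variable {E : Type*} [NormedAddCommGroup E] [NormedSpace ℝ E]

/-- The space of pairs (covector, bilinear form), in which the pair of first and second derivatives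
of a real function takes its values. A second order operator without zeroth order term is a function
of such pairs. -/
abbrev TwoJet (E : Type*) [NormedAddCommGroup E] [NormedSpace ℝ E] : Type _ :=
  (E →L[ℝ] ℝ) × (E →L[ℝ] E →L[ℝ] ℝ)

-- Instance search otherwise times out unfolding the product of operator spaces.
noncomputable instance : NormedAddCommGroup (TwoJet E) := Prod.normedAddCommGroup

noncomputable instance : NormedSpace ℝ (TwoJet E) := Prod.normedSpace

/-- The derivatives of `w` at `x` of orders one and two; unlike in the usual notion of `2`-jet, the
value `w x` is left out. -/
noncomputable def twoJet (w : E → ℝ) (x : E) : TwoJet E :=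
  (fderiv ℝ w x, fderiv ℝ (fderiv ℝ w) x)

/-- Ellipticity of the linear second order operator `w ↦ L (Dw, D²w)`. Testing the second order part
on positive semidefinite and on rank one forms makes a choice of coefficient matrix unnecessary. -/
structure IsElliptic (L : TwoJet E →L[ℝ] ℝ) : Prop where
  nonneg : ∀ T : E →L[ℝ] E →L[ℝ] ℝ, (∀ ξ, 0 ≤ T ξ ξ) → 0 ≤ L (0, T)
  pos : ∀ ν : E →L[ℝ] ℝ, ν ≠ 0 → 0 < L (0, ν.smulRight ν)

theorem twoJet_add_const_mul {w φ : E → ℝ} {x : E} (hw : ContDiffAt ℝ 2 w x)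
    (hφ : ContDiffAt ℝ 2 φ x) (c : ℝ) :
    twoJet (fun y => w y + c * φ y) x = twoJet w x + c • twoJet φ x := by
  have hfst : fderiv ℝ (fun y => w y + c * φ y) =ᶠ[𝓝 x]
      fun y => fderiv ℝ w y + c • fderiv ℝ φ y := by
    filter_upwards [hw.eventually (by simp), hφ.eventually (by simp)] with y hwy hφy
    exact ((hwy.differentiableAt (by simp)).hasFDerivAt.add
      ((hφy.differentiableAt (by simp)).hasFDerivAt.const_mul c)).fderiv
  have hDw := ((hw.fderiv_right (m := 1) (by norm_num)).differentiableAt (by simp)).hasFDerivAt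
  have hDφ := ((hφ.fderiv_right (m := 1) (by norm_num)).differentiableAt (by simp)).hasFDerivAt
  refine Prod.ext hfst.self_of_nhds ?_
  exact hfst.fderiv_eq.trans (hDw.add (hDφ.const_smul c)).fderiv

theorem contDiffAt_twoJet {w : E → ℝ} {x : E} {m k : WithTop ℕ∞} (hw : ContDiffAt ℝ k w x)
    (hmk : m + 2 ≤ k) : ContDiffAt ℝ m (twoJet w) x := by
  have hDw : ContDiffAt ℝ (m + 1) (fderiv ℝ w) x :=
    hw.fderiv_right (by rwa [add_assoc, one_add_one_eq_two])
  exact (hDw.of_le le_self_add).prodMk (hDw.fderiv_right le_rfl)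

/-- Differentiating commutes with taking the jet, by symmetry of the second derivatives of `u` and
of `fderiv ℝ u`. -/
theorem twoJet_fderiv_apply {u : E → ℝ} {x : E} (hu : ContDiffAt ℝ 3 u x) (e : E) :
    twoJet (fun y => fderiv ℝ u y e) x = fderiv ℝ (twoJet u) x e := by
  have hDu : ContDiffAt ℝ 2 (fderiv ℝ u) x := hu.fderiv_right (by norm_num)
  have hDDu : ContDiffAt ℝ 1 (fderiv ℝ (fderiv ℝ u)) x := hDu.fderiv_right (by norm_num)
  have hfst : fderiv ℝ (fun y => fderiv ℝ u y e) =ᶠ[𝓝 x] fun y => fderiv ℝ (fderiv ℝ u) y e := by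
    filter_upwards [hu.eventually (by simp)] with y hy
    exact fderiv_fderiv_apply_comm (hy.of_le (by norm_num)) e
  have hjet : fderiv ℝ (twoJet u) x =
      (fderiv ℝ (fderiv ℝ u) x).prod (fderiv ℝ (fderiv ℝ (fderiv ℝ u)) x) :=
    (hDu.differentiableAt (by simp)).fderiv_prodMk (hDDu.differentiableAt (by simp))
  rw [hjet]
  exact Prod.ext hfst.self_of_nhds (hfst.fderiv_eq.trans (fderiv_fderiv_apply_comm hDu e))

theorem fderiv_twoJet_fderiv_apply_eq_zero {F : TwoJet E → ℝ} {u : E → ℝ} {x : E}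
    (hF : DifferentiableAt ℝ F (twoJet u x)) (hu : ContDiffAt ℝ 3 u x)
    (heq : ∀ᶠ y in 𝓝 x, F (twoJet u y) = 0) (e : E) :
    fderiv ℝ F (twoJet u x) (twoJet (fun y => fderiv ℝ u y e) x) = 0 := by
  have hjet := (contDiffAt_twoJet (m := 1) hu (by norm_num)).differentiableAt (by simp)
  have hcomp : fderiv ℝ (F ∘ twoJet u) x = 0 := by
    have hzero : F ∘ twoJet u =ᶠ[𝓝 x] fun _ => 0 := heq
    rw [hzero.fderiv_eq, fderiv_const_apply]
  rw [fderiv_comp x hF hjet] at hcomp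
  rw [twoJet_fderiv_apply hu]
  exact congrArg (fun T => T e) hcomp

theorem IsElliptic.apply_twoJet_nonpos_of_isLocalMax {L : TwoJet E →L[ℝ] ℝ} (hL : IsElliptic L)
    {v : E → ℝ} {x : E} (hv : ContDiffAt ℝ 2 v x) (hmax : IsLocalMax v x) :
    L (twoJet v x) ≤ 0 := by
  have hneg := hL.nonneg (-fderiv ℝ (fderiv ℝ v) x) fun ξ => by
    simpa using fderiv_fderiv_nonpos_of_isLocalMax hmax hv ξ
  have hjet : twoJet v x = -(0, -fderiv ℝ (fderiv ℝ v) x) := by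
    simp [twoJet, hmax.fderiv_eq_zero]
  rw [hjet, map_neg]
  exact neg_nonpos.2 hneg

end TwoJet

section MaximumPrinciple

variable {E : Type*}

/-- Hopf's barrier, a Gaussian centred at `y`. -/
noncomputable def hopfBarrier [SeminormedAddCommGroup E] (α : ℝ) (y x : E) : ℝ :=
  Real.exp (-α * ‖x - y‖ ^ 2)

theorem hopfBarrier_le_hopfBarrier_iff [SeminormedAddCommGroup E] {α : ℝ} (hα : 0 < α) {y x z : E} :
    hopfBarrier α y z ≤ hopfBarrier α y x ↔ dist x y ≤ dist z y := by
  rw [hopfBarrier, hopfBarrier, Real.exp_le_exp, dist_eq_norm, dist_eq_norm,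
    mul_le_mul_left_of_neg (neg_lt_zero.2 hα), sq_le_sq₀ (norm_nonneg _) (norm_nonneg _)]

variable [NormedAddCommGroup E] [InnerProductSpace ℝ E]

theorem contDiff_hopfBarrier (α : ℝ) (y : E) {k : WithTop ℕ∞} :
    ContDiff ℝ k (hopfBarrier α y) :=
  (contDiff_const.mul ((contDiff_id.sub contDiff_const).norm_sq ℝ)).exp

theorem hasFDerivAt_hopfBarrier (α : ℝ) (y x : E) :
    HasFDerivAt (hopfBarrier α y) ((-(2 * α) * hopfBarrier α y x) • innerSL ℝ (x - y)) x := by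
  refine ((((hasFDerivAt_id (𝕜 := ℝ) x).sub_const y).norm_sq).const_mul (-α)).exp.congr_fderiv ?_
  ext ξ
  simp only [hopfBarrier, id_eq, ContinuousLinearMap.comp_id, map_sub, smul_apply, sub_apply,
    coe_innerSL_apply, nsmul_eq_mul, Nat.cast_ofNat, smul_eq_mul]
  ring

theorem twoJet_hopfBarrier (α : ℝ) (y x : E) :
    twoJet (hopfBarrier α y) x = (2 * α * hopfBarrier α y x) •
      ((2 * α) • (0, (innerSL ℝ (x - y)).smulRight (innerSL ℝ (x - y))) -
        (innerSL ℝ (x - y), innerSL ℝ)) := by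
  have hfst : fderiv ℝ (hopfBarrier α y) =
      fun x => (-(2 * α) * hopfBarrier α y x) • innerSL ℝ (x - y) :=
    funext fun x => (hasFDerivAt_hopfBarrier α y x).fderiv
  have hlin : HasFDerivAt (fun x => innerSL ℝ (x - y)) (innerSL ℝ) x :=
    (innerSL ℝ).hasFDerivAt.comp x ((hasFDerivAt_id x).sub_const y)
  have hsnd := (((hasFDerivAt_hopfBarrier α y x).const_mul (-(2 * α))).fun_smul hlin).fderiv
  rw [twoJet, hfst, hsnd]
  ext
  · simp only [map_sub, smul_apply, sub_apply, coe_innerSL_apply, smul_eq_mul, Prod.smul_mk,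
      smul_zero, Prod.mk_sub_mk, zero_sub, neg_sub]
    ring
  · simp only [map_sub, add_apply, smul_apply, ContinuousLinearMap.smulRight_apply, sub_apply,
      coe_innerSL_apply, smul_eq_mul, Prod.smul_mk, smul_zero, Prod.mk_sub_mk]
    ring

theorem exists_forall_pos_apply_twoJet_hopfBarrier {K : Set E} (hK : IsCompact K)
    {L : E → TwoJet E →L[ℝ] ℝ} (hL : ContinuousOn L K) (hell : ∀ x ∈ K, IsElliptic (L x))
    {y : E} (hy : y ∉ K) :
    ∃ α > 0, ∀ x ∈ K, 0 < L x (twoJet (hopfBarrier α y) x) := by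
  have hν : Continuous fun x : E => (innerSL ℝ (x - y)).smulRight (innerSL ℝ (x - y)) := by
    have hlin : Continuous fun x : E => innerSL ℝ (x - y) := by fun_prop
    exact ((ContinuousLinearMap.smulRightL ℝ E (E →L[ℝ] ℝ)).continuous.comp hlin).clm_apply hlin
  obtain ⟨m, hm, hmle⟩ : ∃ m, 0 < m ∧ ∀ x ∈ K,
      m ≤ L x (0, (innerSL ℝ (x - y)).smulRight (innerSL ℝ (x - y))) := by
    refine hK.exists_forall_le' (hL.clm_apply (continuous_const.prodMk hν).continuousOn)
      fun x hx => (hell x hx).pos _ fun h => ?_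
    have : x - y = 0 := inner_self_eq_zero.1 (congrArg (fun ν => ν (x - y)) h)
    exact hy (sub_eq_zero.1 this ▸ hx)
  obtain ⟨M, hM⟩ := hK.exists_bound_of_continuousOn
    (hL.clm_apply (by fun_prop) :
      ContinuousOn (fun x => L x (innerSL ℝ (x - y), innerSL ℝ)) K)
  obtain ⟨α, hα, hαm⟩ : ∃ α > 0, α * m = |M| + 1 :=
    ⟨(|M| + 1) / m, by positivity, div_mul_cancel₀ _ hm.ne'⟩
  refine ⟨α, hα, fun x hx => ?_⟩
  have hexp : 0 < hopfBarrier α y x := Real.exp_pos _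
  rw [twoJet_hopfBarrier]
  rw [(L x).map_smul, (L x).map_sub, (L x).map_smul, smul_eq_mul, smul_eq_mul]
  refine mul_pos (by positivity) ?_
  have hlower := mul_le_mul_of_nonneg_left (hmle x hx) hα.le
  have hupper := (le_abs_self _).trans ((hM x hx).trans (le_abs_self M))
  linarith [abs_nonneg M]

theorem not_isMaxOn_of_forall_mem_closedBall_lt [ProperSpace E] {Ω : Set E} (hΩ : IsOpen Ω)
    {L : E → TwoJet E →L[ℝ] ℝ} (hL : ContinuousOn L Ω) (hell : ∀ x ∈ Ω, IsElliptic (L x))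
    {w : E → ℝ} (hw : ContDiffOn ℝ 2 w Ω) (hsub : ∀ x ∈ Ω, 0 ≤ L x (twoJet w x)) {y z : E}
    (hz : z ∈ Ω) (hyz : y ≠ z) (hlt : ∀ x ∈ closedBall y (dist z y), x ≠ z → w x < w z) :
    ¬ IsMaxOn w Ω z := by
  intro hmax
  have hR : 0 < dist z y := dist_pos.2 hyz.symm
  obtain ⟨r, hr, hrΩ⟩ := nhds_basis_closedBall.mem_iff.1 (hΩ.mem_nhds hz)
  obtain ⟨ρ, hρ, hρlt⟩ := exists_between (lt_min hr hR)
  have hKΩ : closedBall z ρ ⊆ Ω :=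
    (closedBall_subset_closedBall (hρlt.le.trans (min_le_left _ _))).trans hrΩ
  have hyK : y ∉ closedBall z ρ := by
    rw [mem_closedBall, not_le, dist_comm]
    exact hρlt.trans_le (min_le_right _ _)
  have hK : IsCompact (closedBall z ρ) := isCompact_closedBall z ρ
  obtain ⟨α, hα, hpos⟩ := exists_forall_pos_apply_twoJet_hopfBarrier hK (hL.mono hKΩ)
    (fun x hx => hell x (hKΩ hx)) hyK
  obtain ⟨ε, hε, x, hx, hloc⟩ := exists_isLocalMax_add_mul hK (hw.continuousOn.mono hKΩ)
    (contDiff_hopfBarrier α y (k := 0)).continuous (mem_closedBall_self hρ.le)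
    (hmax.on_subset hKΩ) fun x hx hφ => by
      refine hlt x ((hopfBarrier_le_hopfBarrier_iff hα).1 hφ) ?_
      rintro rfl
      exact hx.2 (mem_interior_iff_mem_nhds.2 (closedBall_mem_nhds x hρ))
  have hxK : x ∈ closedBall z ρ := interior_subset hx
  have hwx : ContDiffAt ℝ 2 w x := hw.contDiffAt (hΩ.mem_nhds (hKΩ hxK))
  have hφx : ContDiffAt ℝ 2 (hopfBarrier α y) x := (contDiff_hopfBarrier α y).contDiffAt
  have hnonpos := (hell x (hKΩ hxK)).apply_twoJet_nonpos_of_isLocalMax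
    (hwx.add (contDiffAt_const.mul hφx)) hloc
  rw [twoJet_add_const_mul hwx hφx, map_add, map_smul, smul_eq_mul] at hnonpos
  linarith [hsub x (hKΩ hxK), mul_pos hε (hpos x hxK)]

theorem eqOn_of_isPreconnected_of_isMaxOn_of_isElliptic [ProperSpace E] {Ω : Set E}
    (hΩ : IsOpen Ω) (hconn : IsPreconnected Ω) {L : E → TwoJet E →L[ℝ] ℝ} (hL : ContinuousOn L Ω)
    (hell : ∀ x ∈ Ω, IsElliptic (L x)) {w : E → ℝ} (hw : ContDiffOn ℝ 2 w Ω)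
    (hsub : ∀ x ∈ Ω, 0 ≤ L x (twoJet w x)) {a : E} (ha : a ∈ Ω) (hmax : IsMaxOn w Ω a) :
    EqOn w (fun _ => w a) Ω := by
  -- Otherwise some ball inside `Ω` would touch the level set `{w = w a}` at a single point.
  have hopen : IsOpen (Ω ∩ w ⁻¹' {w a}) := by
    refine isOpen_iff_mem_nhds.2 fun z ⟨hzΩ, hza⟩ => ?_
    obtain ⟨r, hr, hrΩ⟩ := nhds_basis_closedBall.mem_iff.1 (hΩ.mem_nhds hzΩ)
    have hclosed : IsClosed (closedBall z r ∩ w ⁻¹' {w a}) :=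
      (hw.continuousOn.mono hrΩ).preimage_isClosed_of_isClosed isClosed_closedBall
        isClosed_singleton
    by_contra hnot
    obtain ⟨y, z', hyz', hball, htouch⟩ := exists_closedBall_inter_eq_singleton hclosed
      ⟨mem_closedBall_self hr.le, hza⟩
      (fun h => hnot (mem_of_superset h (inter_subset_inter_left _ hrΩ)))
      (closedBall_mem_nhds z hr)
    have hz' : z' ∈ closedBall y (dist z' y) ∩ (closedBall z r ∩ w ⁻¹' {w a}) :=
      htouch ▸ mem_singleton z'
    have hwz' : w z' = w a := hz'.2.2
    refine not_isMaxOn_of_forall_mem_closedBall_lt hΩ hL hell hw hsub (hrΩ hz'.2.1) hyz'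
      (fun x hx hxz' => ?_) (fun x hx => hwz' ▸ hmax hx)
    refine lt_of_le_of_ne (hwz' ▸ hmax (hrΩ (hball hx))) fun h => hxz' ?_
    exact htouch.subset ⟨hx, hball hx, h.trans hwz'⟩
  have hopen' : IsOpen (Ω ∩ w ⁻¹' {w a}ᶜ) :=
    hw.continuousOn.isOpen_inter_preimage hΩ isOpen_compl_singleton
  have hdisj : Disjoint (Ω ∩ w ⁻¹' {w a}) (Ω ∩ w ⁻¹' {w a}ᶜ) :=
    disjoint_left.2 fun x hx hx' => hx'.2 hx.2
  have hcover : Ω ⊆ Ω ∩ w ⁻¹' {w a} ∪ Ω ∩ w ⁻¹' {w a}ᶜ := by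
    rw [← inter_union_distrib_left, ← preimage_union, union_compl_self, preimage_univ, inter_univ]
  exact fun x hx =>
    (hconn.subset_left_of_subset_union hopen hopen' hdisj hcover ⟨a, ha, ha, rfl⟩ hx).2

theorem exists_eq_clm_of_homogeneous_of_isElliptic [ProperSpace E] (hE : 1 < Module.rank ℝ E)
    {F : TwoJet E → ℝ} (hF : ContDiff ℝ 1 F) {u : E → ℝ}
    (hhom : ∀ t : ℝ, 0 < t → ∀ x, u (t • x) = t * u x) (hu : ContDiffOn ℝ 3 u {0}ᶜ)
    (hell : ∀ x ≠ 0, IsElliptic (fderiv ℝ F (twoJet u x))) (heq : ∀ x ≠ 0, F (twoJet u x) = 0) :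
    ∃ ℓ : E →L[ℝ] ℝ, ∀ x, u x = ℓ x := by
  have hΩ : IsOpen ({0}ᶜ : Set E) := isOpen_compl_singleton
  have hconn : IsConnected ({0}ᶜ : Set E) := isConnected_compl_singleton_of_one_lt_rank hE 0
  obtain ⟨x₀, hx₀⟩ := hconn.nonempty
  have : Nontrivial E := ⟨x₀, 0, hx₀⟩
  have hu3 : ∀ x ∈ ({0}ᶜ : Set E), ContDiffAt ℝ 3 u x := fun x hx =>
    hu.contDiffAt (hΩ.mem_nhds hx)
  have hL : ContinuousOn (fun x => fderiv ℝ F (twoJet u x)) {0}ᶜ :=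
    (hF.continuous_fderiv (by simp)).comp_continuousOn fun x hx =>
      (contDiffAt_twoJet (m := 1) (hu3 x hx) (by norm_num)).continuousAt.continuousWithinAt
  have hconst : ∀ x ≠ 0, fderiv ℝ u x = fderiv ℝ u x₀ := by
    intro x hx
    ext e
    have hw : ContDiffOn ℝ 2 (fun y => fderiv ℝ u y e) {0}ᶜ := fun y hy =>
      (((hu3 y hy).fderiv_right (m := 2) (by norm_num)).clm_apply
        contDiffAt_const).contDiffWithinAt
    obtain ⟨a, ha, hmax⟩ := exists_isMaxOn_compl_zero_of_homogeneous hw.continuousOn fun t ht y =>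
      congrArg (fun ℓ => ℓ e) (fderiv_smul_of_homogeneous ht.ne' (hhom t ht) y)
    have hmp := eqOn_of_isPreconnected_of_isMaxOn_of_isElliptic hΩ hconn.isPreconnected hL hell hw
      (fun y hy => (fderiv_twoJet_fderiv_apply_eq_zero (hF.differentiable (by simp) _) (hu3 y hy)
        (mem_of_superset (hΩ.mem_nhds hy) heq) e).ge) ha hmax
    exact (hmp hx).trans (hmp hx₀).symm
  refine ⟨fderiv ℝ u x₀, fun x => ?_⟩
  rcases eq_or_ne x 0 with rfl | hx
  · have h := hhom 2 two_pos 0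
    rw [smul_zero] at h
    rw [map_zero]
    linarith
  · rw [← hconst x hx, fderiv_apply_self_of_homogeneous (fun t ht => hhom t ht x)
      ((hu3 x hx).differentiableAt (by simp))]

end MaximumPrinciple

section MinimalSurface

variable {E ι : Type*} [NormedAddCommGroup E] [InnerProductSpace ℝ E] [Fintype ι]

/-- This is Lagrange's identity when `T` is the square of a linear form. -/
theorem sum_sum_apply_smul_sub_smul (b : OrthonormalBasis ι ℝ E) (T : E →L[ℝ] E →L[ℝ] ℝ) (p : E) :
    ∑ i, ∑ j, T (⟪b j, p⟫ • b i - ⟪b i, p⟫ • b j) (⟪b j, p⟫ • b i - ⟪b i, p⟫ • b j) =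
      2 * (‖p‖ ^ 2 * ∑ i, T (b i) (b i) - T p p) := by
  have hexpand (i j : ι) :
      T (⟪b j, p⟫ • b i - ⟪b i, p⟫ • b j) (⟪b j, p⟫ • b i - ⟪b i, p⟫ • b j) =
        (⟪b j, p⟫ ^ 2 * T (b i) (b i) - ⟪b j, p⟫ * ⟪b i, p⟫ * T (b i) (b j)) +
          (⟪b i, p⟫ ^ 2 * T (b j) (b j) - ⟪b i, p⟫ * ⟪b j, p⟫ * T (b j) (b i)) := by
    simp only [map_sub, map_smul, sub_apply, smul_apply, smul_eq_mul]
    ring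
  have hnorm : ∑ i, ∑ j, ⟪b j, p⟫ ^ 2 * T (b i) (b i) = ‖p‖ ^ 2 * ∑ i, T (b i) (b i) := by
    simp only [← Finset.sum_mul, b.sum_sq_inner_right, Finset.mul_sum]
  have happly : ∑ i, ∑ j, ⟪b j, p⟫ * ⟪b i, p⟫ * T (b i) (b j) = T p p := by
    conv_rhs => rw [← b.sum_repr' p]
    simp only [map_sum, map_smul, sum_apply, smul_apply, smul_eq_mul, Finset.mul_sum, mul_assoc]
    exact Finset.sum_comm
  have hswap : ∑ i, ∑ j, (⟪b i, p⟫ ^ 2 * T (b j) (b j) - ⟪b i, p⟫ * ⟪b j, p⟫ * T (b j) (b i)) =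
      ∑ i, ∑ j, (⟪b j, p⟫ ^ 2 * T (b i) (b i) - ⟪b j, p⟫ * ⟪b i, p⟫ * T (b i) (b j)) :=
    Finset.sum_comm
  simp only [hexpand, Finset.sum_add_distrib]
  rw [hswap]
  simp only [Finset.sum_sub_distrib, hnorm, happly]
  ring

theorem apply_self_le_norm_sq_mul_sum (b : OrthonormalBasis ι ℝ E) {T : E →L[ℝ] E →L[ℝ] ℝ}
    (hT : ∀ ξ, 0 ≤ T ξ ξ) (p : E) : T p p ≤ ‖p‖ ^ 2 * ∑ i, T (b i) (b i) := by
  have hsum : 0 ≤ ∑ i, ∑ j,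
      T (⟪b j, p⟫ • b i - ⟪b i, p⟫ • b j) (⟪b j, p⟫ • b i - ⟪b i, p⟫ • b j) :=
    Finset.sum_nonneg fun i _ => Finset.sum_nonneg fun j _ => hT _
  rw [sum_sum_apply_smul_sub_smul] at hsum
  linarith

variable [CompleteSpace E]

/-- The minimal surface operator `(p, T) ↦ (1 + |p|²) tr T - T(p, p)`, where the first component of
the jet is identified with the vector `p` by Riesz duality and the trace is computed in the basis
`b`. -/
noncomputable def minimalSurfaceOp (b : OrthonormalBasis ι ℝ E) (j : TwoJet E) : ℝ :=
  (1 + ‖(toDual ℝ E).symm j.1‖ ^ 2) * ∑ i, j.2 (b i) (b i) -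
    j.2 ((toDual ℝ E).symm j.1) ((toDual ℝ E).symm j.1)

theorem contDiff_minimalSurfaceOp (b : OrthonormalBasis ι ℝ E) {k : WithTop ℕ∞} :
    ContDiff ℝ k (minimalSurfaceOp b) := by
  have hp : ContDiff ℝ k fun j : TwoJet E => (toDual ℝ E).symm j.1 :=
    ((toDual ℝ E).symm : (E →L[ℝ] ℝ) ≃ₗᵢ[ℝ] E).contDiff.comp contDiff_fst
  have htr : ContDiff ℝ k fun j : TwoJet E => ∑ i, j.2 (b i) (b i) := by fun_prop
  exact ((contDiff_const.add (hp.norm_sq ℝ)).mul htr).sub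
    ((contDiff_snd.clm_apply hp).clm_apply hp)

theorem fderiv_minimalSurfaceOp_apply (b : OrthonormalBasis ι ℝ E) (j : TwoJet E)
    (T : E →L[ℝ] E →L[ℝ] ℝ) :
    fderiv ℝ (minimalSurfaceOp b) j (0, T) = minimalSurfaceOp b (j.1, T) := by
  have haffine (t : ℝ) : minimalSurfaceOp b (j + t • (0, T)) =
      minimalSurfaceOp b j + t * minimalSurfaceOp b (j.1, T) := by
    simp only [minimalSurfaceOp, Prod.smul_mk, smul_zero, Prod.fst_add, add_zero, Prod.snd_add,
      add_apply, smul_apply, smul_eq_mul, Finset.sum_add_distrib, ← Finset.mul_sum]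
    ring
  have hdiff := (contDiff_minimalSurfaceOp b (k := 1)).differentiable (by simp) j
  rw [← hdiff.lineDeriv_eq_fderiv, lineDeriv]
  simp only [haffine]
  simp

theorem sum_apply_le_minimalSurfaceOp (b : OrthonormalBasis ι ℝ E) (ℓ : E →L[ℝ] ℝ)
    {T : E →L[ℝ] E →L[ℝ] ℝ} (hT : ∀ ξ, 0 ≤ T ξ ξ) :
    ∑ i, T (b i) (b i) ≤ minimalSurfaceOp b (ℓ, T) := by
  have h := apply_self_le_norm_sq_mul_sum b hT ((toDual ℝ E).symm ℓ)
  simp only [minimalSurfaceOp]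
  linarith

theorem isElliptic_fderiv_minimalSurfaceOp (b : OrthonormalBasis ι ℝ E) (j : TwoJet E) :
    IsElliptic (fderiv ℝ (minimalSurfaceOp b) j) where
  nonneg T hT := by
    rw [fderiv_minimalSurfaceOp_apply]
    exact (Finset.sum_nonneg fun i _ => hT _).trans (sum_apply_le_minimalSurfaceOp b j.1 hT)
  pos ν hν := by
    obtain ⟨i, hi⟩ : ∃ i, ν (b i) ≠ 0 := by
      by_contra! h
      exact hν (ContinuousLinearMap.coe_injective (b.toBasis.ext (by simpa using h)))
    rw [fderiv_minimalSurfaceOp_apply]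
    have hsum : 0 < ∑ i, ν.smulRight ν (b i) (b i) :=
      Finset.sum_pos' (fun i _ => mul_self_nonneg _) ⟨i, Finset.mem_univ i, mul_self_pos.2 hi⟩
    exact hsum.trans_le (sum_apply_le_minimalSurfaceOp b j.1 fun ξ => mul_self_nonneg _)

end MinimalSurface

theorem inner_hess_left {n : ℕ} (u : EuclideanSpace ℝ (Fin n) → ℝ)
    (x ξ η : EuclideanSpace ℝ (Fin n)) : ⟪hess u x ξ, η⟫ = fderiv ℝ (fderiv ℝ u) x ξ η := by
  have hgrad : gradient u = ((toDual ℝ (EuclideanSpace ℝ (Fin n))).symm :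
      (EuclideanSpace ℝ (Fin n) →L[ℝ] ℝ) ≃ₗᵢ[ℝ] EuclideanSpace ℝ (Fin n)) ∘ fderiv ℝ u := rfl
  rw [hess, hgrad, LinearIsometryEquiv.comp_fderiv]
  exact toDual_symm_apply ..

theorem minimalSurfaceOp_twoJet {n : ℕ} (u : EuclideanSpace ℝ (Fin n) → ℝ)
    (x : EuclideanSpace ℝ (Fin n)) :
    minimalSurfaceOp (EuclideanSpace.basisFun (Fin n) ℝ) (twoJet u x) =
      (1 + ‖gradient u x‖ ^ 2) * lap u x - ⟪gradient u x, hess u x (gradient u x)⟫ := by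
  simp only [minimalSurfaceOp, twoJet, lap, EuclideanSpace.basisFun_apply,
    real_inner_comm (hess u x (gradient u x)), inner_hess_left]
  rfl

theorem subsequent_singularities_stmt9_general {n : ℕ} (hn : 2 ≤ n)
    (u : EuclideanSpace ℝ (Fin n) → ℝ)
    (hhom : ∀ t : ℝ, 0 ≤ t → ∀ x : EuclideanSpace ℝ (Fin n), u (t • x) = t * u x)
    (hu : ContDiffOn ℝ 3 u {(0 : EuclideanSpace ℝ (Fin n))}ᶜ)
    (hmse : ∀ x : EuclideanSpace ℝ (Fin n), x ≠ 0 →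
      (1 + ‖gradient u x‖ ^ 2) * lap u x - ⟪gradient u x, hess u x (gradient u x)⟫ = 0) :
    ∃ a : EuclideanSpace ℝ (Fin n), ∀ x, u x = ⟪a, x⟫ := by
  have hrank : 1 < Module.rank ℝ (EuclideanSpace ℝ (Fin n)) := by
    rw [← Module.finrank_eq_rank, finrank_euclideanSpace_fin]
    exact_mod_cast hn
  obtain ⟨ℓ, hℓ⟩ := exists_eq_clm_of_homogeneous_of_isElliptic hrank
    (contDiff_minimalSurfaceOp (EuclideanSpace.basisFun (Fin n) ℝ)) (fun t ht => hhom t ht.le) hu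
    (fun x _ =>
      isElliptic_fderiv_minimalSurfaceOp (EuclideanSpace.basisFun (Fin n) ℝ) (twoJet u x))
    fun x hx => (minimalSurfaceOp_twoJet u x).trans (hmse x hx)
  exact ⟨(toDual ℝ _).symm ℓ, fun x => by rw [hℓ, toDual_symm_apply]⟩

/-- For `n ≥ 2`, a Lipschitz, positively one-homogeneous function
`u : ℝⁿ → ℝ` (so its graph is a cone) that is smooth on `ℝⁿ \ {0}` and satisfies the minimal
surface equation `(1 + |∇u|²)·Δu − ⟨∇u,(D²u)∇u⟩ = 0` there, is linear: `u(x) = ⟨a, x⟩`. -/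
theorem subsequent_singularities_stmt9 {n : ℕ} (hn : 2 ≤ n)
    (u : EuclideanSpace ℝ (Fin n) → ℝ)
    (hlip : ∃ L : NNReal, LipschitzWith L u)
    (hhom : ∀ t : ℝ, 0 ≤ t → ∀ x : EuclideanSpace ℝ (Fin n), u (t • x) = t * u x)
    (hsmooth : ContDiffOn ℝ (⊤ : ℕ∞) u {(0 : EuclideanSpace ℝ (Fin n))}ᶜ)
    (hmse : ∀ x : EuclideanSpace ℝ (Fin n), x ≠ 0 →
      (1 + ‖gradient u x‖ ^ 2) * lap u x - ⟪gradient u x, hess u x (gradient u x)⟫ = 0) :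
    ∃ a : EuclideanSpace ℝ (Fin n), ∀ x, u x = ⟪a, x⟫ := by
  exact subsequent_singularities_stmt9_general hn u hhom
    (hsmooth.of_le (WithTop.coe_le_coe.2 (le_top : (3 : ℕ∞) ≤ ⊤))) hmse
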